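/- Let t ≥ 1 and let k₁, …, k_t be integers with each k_i ≥ 2. The direct product C_{k₁}^0 × ⋯ × C_{k_t}^0, i.e., the digraph on the product of the cyclic groups ZMod k₁ × ⋯ × ZMod k_t with an arc from x to y if and only if y_i = x_i + 1 for every i, is an ECD digraph if and only if at least one of the numbers k₁, …, k_t is even. -/

import Mathlib

/-- The closed out-neighborhood of `v` in the digraph with arc relation `A`. -/
def closedOut {V : Type*} (A : V → V → Prop) (v : V) : Set V := {v} ∪ {u | A v u}

/-- `S` is an efficient closed dominating (ECD) set: the closed out-neighborhoods
centered in vertices of `S` are pairwise disjoint and cover the whole vertex set. -/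
def IsECD {V : Type*} (A : V → V → Prop) (S : Set V) : Prop :=
  (∀ v ∈ S, ∀ w ∈ S, v ≠ w → closedOut A v ∩ closedOut A w = ∅) ∧
  (⋃ v ∈ S, closedOut A v) = Set.univ

/-- A digraph is an ECD digraph if it admits an ECD set. -/
def IsECDDigraph {V : Type*} (A : V → V → Prop) : Prop := ∃ S, IsECD A S

/-!
An efficient closed dominating set contains, for every vertex `u`, exactly one vertex whose closed
out-neighborhood contains `u`. If the arcs are `v → f v` for a fixed-point-free permutation `f`, the
only candidates for `u = f v` are `v` and `f v`, so membership has to alternate along every cycle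
of `f`, which is possible if and only if no cycle has odd length. In the direct product of directed
cycles, `f` adds `1` in every coordinate, and all its cycles have length `lcm (k₁, …, k_t)`.
-/

open Function

theorem isECD_iff_existsUnique {V : Type*} {A : V → V → Prop} {S : Set V} :
    IsECD A S ↔ ∀ u, ∃! v, v ∈ S ∧ u ∈ closedOut A v := by
  constructor
  · rintro ⟨hdisj, hcover⟩ u
    have hu : u ∈ ⋃ v ∈ S, closedOut A v := hcover ▸ Set.mem_univ u
    obtain ⟨v, hv, huv⟩ := Set.mem_iUnion₂.1 hu
    refine ⟨v, ⟨hv, huv⟩, fun w ⟨hw, huw⟩ ↦ by_contra fun hne ↦ ?_⟩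
    exact Set.eq_empty_iff_forall_notMem.1 (hdisj w hw v hv hne) u ⟨huw, huv⟩
  · refine fun h ↦ ⟨fun v hv w hw hne ↦ ?_, Set.eq_univ_of_forall fun u ↦ ?_⟩
    · exact Set.eq_empty_iff_forall_notMem.2 fun u ⟨huv, huw⟩ ↦
        hne ((h u).unique ⟨hv, huv⟩ ⟨hw, huw⟩)
    · obtain ⟨v, ⟨hv, huv⟩, -⟩ := h u
      exact Set.mem_iUnion₂.2 ⟨v, hv, huv⟩

/-- `S` alternates along `f` if each step of `f` enters or leaves `S`; equivalently, `S` and its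
complement form a proper 2-coloring of the digraph with arcs `v → f v`. -/
def AlternatesAlong {V : Type*} (f : V → V) (S : Set V) : Prop := ∀ v, f v ∈ S ↔ v ∉ S

theorem AlternatesAlong.iterate_mem_iff {V : Type*} {f : V → V} {S : Set V}
    (h : AlternatesAlong f S) (n : ℕ) (v : V) : f^[n] v ∈ S ↔ (v ∈ S ↔ Even n) := by
  induction n with
  | zero => simp
  | succ n ih => rw [iterate_succ_apply', h, ih, Nat.even_add_one]; tauto

theorem AlternatesAlong.even_minimalPeriod {V : Type*} {f : V → V} {S : Set V}
    (h : AlternatesAlong f S) (v : V) : Even (minimalPeriod f v) := by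
  have hreturn := h.iterate_mem_iff (minimalPeriod f v) v
  rw [iterate_minimalPeriod] at hreturn
  tauto

section Perm

variable {V : Type*} {f : Equiv.Perm V}

theorem isECD_perm_iff_alternatesAlong (hf : ∀ v, f v ≠ v) {S : Set V} :
    IsECD (fun x y ↦ y = f x) S ↔ AlternatesAlong f S := by
  have mem_closedOut_iff (v w : V) : f v ∈ closedOut (fun x y ↦ y = f x) w ↔ w = f v ∨ w = v := by
    simp [closedOut, eq_comm, or_comm]
  rw [isECD_iff_existsUnique, ← f.forall_congr_right]
  refine forall_congr' fun v ↦ ?_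
  simp only [mem_closedOut_iff]
  constructor
  · rintro ⟨w, ⟨hw, rfl | rfl⟩, huniq⟩
    · exact iff_of_true hw fun hv ↦ hf v (huniq v ⟨hv, .inr rfl⟩).symm
    · exact iff_of_false (fun hfw ↦ hf w (huniq (f w) ⟨hfw, .inl rfl⟩)) (not_not_intro hw)
  · intro h
    by_cases hv : v ∈ S
    · refine ⟨v, ⟨hv, .inr rfl⟩, ?_⟩
      rintro w ⟨hw, rfl | rfl⟩
      exacts [absurd hv (h.1 hw), rfl]
    · refine ⟨f v, ⟨h.2 hv, .inl rfl⟩, ?_⟩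
      rintro w ⟨hw, rfl | rfl⟩
      exacts [rfl, absurd hw hv]

theorem even_iff_even_of_zpow_apply_eq {v : V} (hf : Even (minimalPeriod f v)) {m n : ℤ}
    (h : (f ^ m) v = (f ^ n) v) : Even m ↔ Even n := by
  have hfix : f ^ (m - n) • v = v := by
    rw [sub_eq_neg_add, zpow_add, mul_smul, zpow_neg, inv_smul_eq_iff]
    exact h
  have hdvd : (minimalPeriod f v : ℤ) ∣ m - n :=
    MulAction.zpow_smul_eq_iff_minimalPeriod_dvd.1 hfix
  exact Int.even_sub.1 (((Int.even_coe_nat _).2 hf).trans_dvd hdvd)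

theorem exists_alternatesAlong_of_even_minimalPeriod
    (hf : ∀ v, Even (minimalPeriod f v)) : ∃ S, AlternatesAlong f S := by
  let base (v : V) : V := (Quotient.mk (Equiv.Perm.SameCycle.setoid f) v).out
  have base_apply (v : V) : base (f v) = base v :=
    congrArg Quotient.out <| Quotient.sound <| Equiv.Perm.sameCycle_apply_left.2 <| .refl f v
  have base_sameCycle (v : V) : f.SameCycle (base v) v :=
    Quotient.exact (s := Equiv.Perm.SameCycle.setoid f) (Quotient.out_eq _)
  have zpow_succ_apply (n : ℤ) (v : V) : (f ^ (n + 1)) v = f ((f ^ n) v) := by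
    rw [add_comm, zpow_one_add, Equiv.Perm.mul_apply]
  refine ⟨{v | ∃ n : ℤ, Even n ∧ (f ^ n) (base v) = v}, fun v ↦ ⟨?_, fun hv ↦ ?_⟩⟩
  · rintro ⟨m, hm, hmv⟩ ⟨n, hn, hnv⟩
    rw [base_apply] at hmv
    have hmn : (f ^ (n + 1)) (base v) = (f ^ m) (base v) := by rw [zpow_succ_apply, hnv, hmv]
    exact Int.even_add_one.1 ((even_iff_even_of_zpow_apply_eq (hf _) hmn).2 hm) hn
  · obtain ⟨n, hn⟩ := base_sameCycle v
    have hn_odd : ¬Even n := fun h ↦ hv ⟨n, h, hn⟩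
    exact ⟨n + 1, Int.even_add_one.2 hn_odd, by rw [base_apply, zpow_succ_apply, hn]⟩

/-- On an infinite cycle `minimalPeriod` takes the value `0`, which is even. -/
theorem isECDDigraph_perm_iff (hf : ∀ v, f v ≠ v) :
    IsECDDigraph (fun x y ↦ y = f x) ↔ ∀ v, Even (minimalPeriod f v) := by
  simp only [IsECDDigraph, isECD_perm_iff_alternatesAlong hf]
  exact ⟨fun ⟨_, hS⟩ ↦ hS.even_minimalPeriod,
    exists_alternatesAlong_of_even_minimalPeriod⟩

end Perm

theorem minimalPeriod_add_right {G : Type*} [AddLeftCancelMonoid G] (g x : G) :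
    minimalPeriod (· + g) x = addOrderOf g :=
  minimalPeriod_eq_minimalPeriod_iff.2 fun n ↦ by
    simp [IsPeriodicPt, IsFixedPt]

theorem isECDDigraph_add_right_iff {G : Type*} [AddGroup G] {g : G} (hg : g ≠ 0) :
    IsECDDigraph (fun x y ↦ y = x + g) ↔ Even (addOrderOf g) := by
  have hfix (x : G) : Equiv.addRight g x ≠ x := by simpa using hg
  simpa [minimalPeriod_add_right] using isECDDigraph_perm_iff hfix

theorem prime_dvd_finset_lcm_iff {ι : Type*} {p : ℕ} (hp : p.Prime) (s : Finset ι) (k : ι → ℕ) :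
    p ∣ s.lcm k ↔ ∃ i ∈ s, p ∣ k i := by
  classical
  induction s using Finset.induction_on with
  | empty => simpa using hp.ne_one
  | insert i s _ ih => simp [Finset.lcm_insert, lcm_eq_nat_lcm, hp.dvd_lcm, ih]

/-- A factor with `k i = 1` is a loop, and one with `k i = 0` is a two-way infinite path, since
`ZMod 0 = ℤ`. -/
theorem dirprod_cycles_ecd_iff_general {ι : Type*} [Finite ι] (k : ι → ℕ) (hk : ∃ i, k i ≠ 1) :
    IsECDDigraph (fun (x y : ∀ i, ZMod (k i)) => ∀ i, y i = x i + 1) ↔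
      ∃ i, Even (k i) := by
  cases nonempty_fintype ι
  have order_one : addOrderOf (1 : ∀ i, ZMod (k i)) = Finset.univ.lcm k := by
    simp [Pi.addOrderOf]
  have hone : (1 : ∀ i, ZMod (k i)) ≠ 0 := by
    obtain ⟨i, hi⟩ := hk
    have := ZMod.nontrivial_iff.2 hi
    exact fun h ↦ one_ne_zero (congrFun h i)
  calc IsECDDigraph (fun (x y : ∀ i, ZMod (k i)) => ∀ i, y i = x i + 1)
    _ ↔ IsECDDigraph (fun x y : ∀ i, ZMod (k i) ↦ y = x + 1) := by simp only [funext_iff]; rfl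
    _ ↔ Even (Finset.univ.lcm k) := by rw [isECDDigraph_add_right_iff hone, order_one]
    _ ↔ ∃ i, Even (k i) := by
      simp [even_iff_two_dvd, prime_dvd_finset_lcm_iff Nat.prime_two]

/-- The direct product `C_{k₁}^0 × ⋯ × C_{k_t}^0` of directed cycles (each `k_i ≥ 2`)
is an ECD digraph iff at least one of the `k_i` is even. -/
theorem dirprod_cycles_ecd_iff (t : ℕ) (ht : 1 ≤ t) (k : Fin t → ℕ)
    (hk : ∀ i, 2 ≤ k i) :
    IsECDDigraph (fun (x y : ∀ i, ZMod (k i)) => ∀ i, y i = x i + 1) ↔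
      ∃ i, Even (k i) :=
  dirprod_cycles_ecd_iff_general k ⟨⟨0, ht⟩, (Nat.lt_of_succ_le (hk _)).ne'⟩
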